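/- Let L be a relational first-order language, let U be a countably infinite ultrahomogeneous L-structure with the pigeonhole property, and let u : ℕ → U be a bijection. Then the enumeration endowment of U is indivisible: for every coloring c : U → Bool there is an L-embedding e : U ↪ U such that c is constant on the range of e and the map n ↦ u⁻¹(e (u n)) is strictly increasing. -/

import Mathlib

open FirstOrder

def HasPigeonhole (L : Language) (U : Type*) [L.Structure U] : Prop :=
  ∀ S : Set U, (∃ f : U ↪[L] U, Set.range f = S) ∨ (∃ f : U ↪[L] U, Set.range f = Sᶜ)

/-- Extending a finite partial embedding into the range of `h`. -/
theorem extend_into {L : Language} [L.IsRelational] {U : Type*} [L.Structure U]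
    (hU : L.IsUltrahomogeneous U) (e h : U ↪[L] U) (A : Set U) (hA : A.Finite)
    (hr : ∀ a ∈ A, e a ∈ Set.range h) :
    ∃ e' : U ↪[L] U, (∀ a ∈ A, e' a = e a) ∧ ∀ x, e' x ∈ Set.range h := by
  have hcl : ∀ a, a ∈ Language.Substructure.closure L A → a ∈ A := by
    intro a ha
    rw [← SetLike.mem_coe, Language.Substructure.closure_eq_of_isRelational] at ha
    exact ha
  have hr' : ∀ a : Language.Substructure.closure L A, ∃ y, h y = e a := fun a =>
    hr a (hcl a a.2)
  choose k hk using hr'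
  let φ : Language.Substructure.closure L A ↪[L] U :=
    { toFun := k
      inj' := by
        intro a b hab
        apply Subtype.ext
        apply e.injective
        rw [← hk a, ← hk b, hab]
      map_fun' := fun f => isEmptyElim f
      map_rel' := by
        intro n r x
        rw [← h.map_rel r (k ∘ x)]
        have : (h ∘ (k ∘ x)) = e ∘ (fun i => ((x i : Language.Substructure.closure L A) : U)) := by
          funext i
          exact hk (x i)
        rw [this, e.map_rel]
        rfl }
  obtain ⟨g, hg⟩ := hU _ (Language.Substructure.fg_closure hA) φ
  refine ⟨h.comp g.toEmbedding, ?_, fun x => ⟨g x, rfl⟩⟩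
  intro a ha
  have h1 := hk ⟨a, Language.Substructure.subset_closure ha⟩
  have h2 : φ ⟨a, Language.Substructure.subset_closure ha⟩ = g a := by rw [hg]; rfl
  change h (g a) = e a
  rw [← h2]
  exact h1

theorem enumeration_endowment_indivisible {L : Language} [L.IsRelational]
    {U : Type*} [L.Structure U] [Countable U] [Infinite U]
    (hU : L.IsUltrahomogeneous U) (hP : HasPigeonhole L U)
    (u : ℕ ≃ U) :
    ∀ c : U → Bool, ∃ e : U ↪[L] U,
      (∀ x y : U, c (e x) = c (e y)) ∧
      StrictMono (fun n => u.symm (e (u n))) := by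
  intro c
  obtain ⟨b, f, hf⟩ : ∃ (b : Bool) (f : U ↪[L] U), Set.range f = {x | c x = b} := by
    rcases hP {x | c x = true} with ⟨f, hf⟩ | ⟨f, hf⟩
    · exact ⟨true, f, hf⟩
    · refine ⟨false, f, hf.trans ?_⟩
      ext x
      simp
  have step : ∀ (n : ℕ) (e : {e : U ↪[L] U // ∀ x, c (e x) = b}),
      ∃ e' : {e : U ↪[L] U // ∀ x, c (e x) = b},
        (∀ i < n, e'.1 (u i) = e.1 (u i)) ∧
        ∀ i < n, u.symm (e.1 (u i)) < u.symm (e'.1 (u n)) := by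
    rintro n ⟨e, he⟩
    have hAfin : (u '' Set.Iio n).Finite := (Set.finite_Iio n).image _
    let F : Set U := (⋃ i ∈ Set.Iio n, u '' Set.Iic (u.symm (e (u i)))) \ (e '' (u '' Set.Iio n))
    have hF : F.Finite :=
      ((Set.finite_Iio n).biUnion (fun i _ => (Set.finite_Iic _).image _)).subset
        Set.sdiff_subset
    obtain ⟨g, hg⟩ : ∃ g : U ↪[L] U, Set.range g = (f ⁻¹' F)ᶜ := by
      rcases hP (f ⁻¹' F) with ⟨g, hg⟩ | h
      · exfalso
        have := hF.preimage (f.injective.injOn (s := f ⁻¹' F))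
        rw [← hg] at this
        exact Set.infinite_range_of_injective g.injective this
      · exact h
    obtain ⟨e', he1, he2⟩ := extend_into hU e (f.comp g) _ hAfin (by
      intro a ha
      have h1 : e a ∈ Set.range f := by rw [hf]; exact he a
      obtain ⟨y, hy⟩ := h1
      have h2 : y ∈ Set.range g := by
        rw [hg]
        intro hyF
        have : f y ∈ F := hyF
        rw [hy] at this
        exact this.2 ⟨a, ha, rfl⟩
      obtain ⟨z, hz⟩ := h2
      exact ⟨z, by rw [Language.Embedding.comp_apply, hz, hy]⟩)
    have hnF : ∀ x, e' x ∉ F := by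
      intro x hx
      obtain ⟨z, hz⟩ := he2 x
      have : g z ∈ (f ⁻¹' F)ᶜ := by rw [← hg]; exact ⟨z, rfl⟩
      apply this
      rw [← hz] at hx
      exact hx
    refine ⟨⟨e', fun x => ?_⟩, fun i hi => he1 _ ⟨i, hi, rfl⟩, fun i hi => ?_⟩
    · obtain ⟨z, hz⟩ := he2 x
      have : f (g z) ∈ {x | c x = b} := by rw [← hf]; exact ⟨_, rfl⟩
      rw [← hz]
      exact this
    · by_contra hlt
      apply hnF (u n)
      refine ⟨?_, ?_⟩
      · simp only [Set.mem_iUnion]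
        exact ⟨i, hi, u.symm (e' (u n)), not_lt.mp hlt, by simp⟩
      · rintro ⟨_, ⟨j, hj, rfl⟩, hje⟩
        rw [← he1 _ ⟨j, hj, rfl⟩] at hje
        have := u.injective (e'.injective hje)
        exact absurd hj (by simp [this])
  choose next hn1 hn2 using step
  have hf0 : ∀ x, c (f x) = b := fun x => by
    have : f x ∈ {x | c x = b} := by rw [← hf]; exact ⟨_, rfl⟩
    exact this
  let E : ℕ → {e : U ↪[L] U // ∀ x, c (e x) = b} := fun n => Nat.rec ⟨f, hf0⟩ (fun n e => next n e) n
  have hE : ∀ n, E (n + 1) = next n (E n) := fun n => rfl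
  have stab : ∀ i m, i < m → (E m).1 (u i) = (E (i + 1)).1 (u i) := by
    intro i m him
    induction m, him using Nat.le_induction with
    | base => rfl
    | succ m hm ih => rw [hE m, hn1 m (E m) i hm, ih]
  let d : U → U := fun x => (E (u.symm x + 1)).1 x
  have hd : ∀ x m, u.symm x < m → d x = (E m).1 x := by
    intro x m hm
    have := stab _ m hm
    rw [u.apply_symm_apply] at this
    exact this.symm
  let e : U ↪[L] U :=
    { toFun := d
      inj' := by
        intro x y hxy
        have h1 := hd x (max (u.symm x) (u.symm y) + 1) (by omega)
        have h2 := hd y (max (u.symm x) (u.symm y) + 1) (by omega)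
        rw [h1, h2] at hxy
        exact (E (max (u.symm x) (u.symm y) + 1)).1.injective hxy
      map_fun' := fun f => isEmptyElim f
      map_rel' := by
        intro n r x
        have : d ∘ x = (E (Finset.univ.sup (fun i => u.symm (x i)) + 1)).1 ∘ x := by
          funext i
          refine hd (x i) (Finset.univ.sup (fun i => u.symm (x i)) + 1) ?_
          exact Nat.lt_succ_of_le
            (Finset.le_sup (f := fun i => u.symm (x i)) (Finset.mem_univ i))
        rw [this, Language.Embedding.map_rel] }
  refine ⟨e, fun x y => ((E (u.symm x + 1)).2 x).trans ((E (u.symm y + 1)).2 y).symm, ?_⟩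
  intro i n hin
  change u.symm (d (u i)) < u.symm (d (u n))
  rw [hd (u i) n (by simpa using hin), hd (u n) (n + 1) (by simp), hE]
  exact hn2 n (E n) i hin
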